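/- Let m ≥ 2, d ≥ 1 be integers and W a d×d complex matrix satisfying W³ = −W, and let k be the rank of W. Let 𝒪_{m−1} be the (m−1)d × (m−1)d complex matrix which, as an (m−1)×(m−1) block matrix with d×d blocks, has diagonal blocks 2I, blocks −I − iW directly above the diagonal, blocks −I + iW directly below the diagonal, and zero blocks elsewhere. Then det 𝒪_{m−1} = 2^{k(m−1)} · m^{d−k}. In particular, if W = 0 (the isotropic case) then det 𝒪_{m−1} = m^d, and if W has rank 2(d−n) (the co-isotropic case, dim Γ = d in 𝔹_n) then det 𝒪_{m−1} = 2^{2(d−n)(m−1)} m^{2n−d}. -/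

import Mathlib

open Complex

/-- The `(m−1)d × (m−1)d` block-tridiagonal matrix `𝒪_{m−1}` with diagonal
blocks `2I`, blocks `−I − iW` directly above the diagonal and `−I + iW`
directly below the diagonal. -/
noncomputable def calO (m d : ℕ) (W : Matrix (Fin d) (Fin d) ℂ) :
    Matrix (Fin (m - 1) × Fin d) (Fin (m - 1) × Fin d) ℂ :=
  fun p q =>
    if p.1 = q.1 then (if p.2 = q.2 then 2 else 0)
    else if (p.1 : ℕ) + 1 = (q.1 : ℕ) then
      -(if p.2 = q.2 then 1 else 0) - Complex.I * W p.2 q.2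
    else if (q.1 : ℕ) + 1 = (p.1 : ℕ) then
      -(if p.2 = q.2 then 1 else 0) + Complex.I * W p.2 q.2
    else 0

/-- scalar tridiagonal matrix -/
noncomputable def triT (n : ℕ) (w : ℂ) : Matrix (Fin n) (Fin n) ℂ :=
  fun p q =>
    if p = q then 2
    else if (p : ℕ) + 1 = (q : ℕ) then -1 - Complex.I * w
    else if (q : ℕ) + 1 = (p : ℕ) then -1 + Complex.I * w
    else 0

lemma triT_succ (n : ℕ) (w : ℂ) :
    (triT (n+1) w).submatrix Fin.succ Fin.succ = triT n w := by
  ext i j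
  simp [triT, Fin.ext_iff]

lemma triT_rec (n : ℕ) (w : ℂ) :
    (triT (n+2) w).det = 2 * (triT (n+1) w).det - (1 + w^2) * (triT n w).det := by
  have hI : Complex.I ^ 2 = -1 := Complex.I_sq
  rw [Matrix.det_succ_row_zero, Fin.sum_univ_succ, Fin.sum_univ_succ]
  have h0 : ∀ i : Fin n, triT (n+2) w 0 i.succ.succ = 0 := by
    intro i
    simp [triT, Fin.ext_iff]
  have h1 : ((triT (n+2) w).submatrix Fin.succ (Fin.succAbove (Fin.succ 0))).det
      = (-1 + Complex.I * w) * (triT n w).det := by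
    rw [Matrix.det_succ_column_zero, Fin.sum_univ_succ]
    have h2 : ∀ i : Fin n, ((triT (n+2) w).submatrix Fin.succ (Fin.succAbove (Fin.succ 0))) i.succ 0 = 0 := by
      intro i
      simp [triT, Fin.ext_iff]
    have h3 : (((triT (n+2) w).submatrix Fin.succ (Fin.succAbove (Fin.succ 0))).submatrix (Fin.succAbove 0) Fin.succ) = triT n w := by
      ext i j
      simp [triT, Fin.ext_iff, Fin.succAbove]
    rw [h3]
    simp only [h2]
    simp [triT, Fin.ext_iff]
  rw [h1]
  simp only [h0]
  have h4 : (triT (n+2) w).submatrix Fin.succ (Fin.succAbove 0) = triT (n+1) w := by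
    rw [← triT_succ (n+1)]; ext i j; simp
  rw [h4]
  have h5 : triT (n+2) w 0 0 = 2 := by simp [triT]
  have h6 : triT (n+2) w 0 (Fin.succ 0) = -1 - Complex.I * w := by simp [triT, Fin.ext_iff]
  rw [h5, h6]
  simp
  linear_combination (w^2 * (triT n w).det) * hI

lemma triT_zero_det (n : ℕ) : (triT n 0).det = n + 1 := by
  induction n using Nat.twoStepInduction with
  | zero => simp
  | one => simp [triT]; norm_num
  | more n h1 h2 => rw [triT_rec, h1, h2]; push_cast; ring

lemma triT_ne_det (n : ℕ) (w : ℂ) (hw : 1 + w^2 = 0) : (triT n w).det = 2 ^ n := by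
  induction n using Nat.twoStepInduction with
  | zero => simp
  | one => simp [triT]
  | more n h1 h2 => rw [triT_rec, h2, hw]; ring

lemma calO_diag (m d : ℕ) (l : Fin d → ℂ) :
    calO m d (Matrix.diagonal l) = Matrix.blockDiagonal (fun j => triT (m-1) (l j)) := by
  ext ⟨i, a⟩ ⟨j, b⟩
  simp only [calO, triT, Matrix.blockDiagonal_apply, Matrix.diagonal_apply]
  by_cases h : a = b
  · simp [h]
  · simp [h]

lemma calO_conj (m d : ℕ) (W V P : Matrix (Fin d) (Fin d) ℂ) (h : W * P = P * V) :
    calO m d W * Matrix.kroneckerMap (· * ·) 1 P = Matrix.kroneckerMap (· * ·) 1 P * calO m d V := by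
  have key : ∀ W : Matrix (Fin d) (Fin d) ℂ, ∃ A B C : Matrix (Fin (m-1)) (Fin (m-1)) ℂ, 
    ∀ W : Matrix (Fin d) (Fin d) ℂ, calO m d W = Matrix.kroneckerMap (· * ·) A 1 + Matrix.kroneckerMap (· * ·) B W := by
    intro _
    refine ⟨triT (m-1) 0, Matrix.of (fun p q => if (p : ℕ) + 1 = q then -Complex.I else if (q : ℕ) + 1 = p then Complex.I else 0), 0, ?_⟩
    intro W
    ext ⟨i, a⟩ ⟨j, b⟩
    simp only [calO, triT, Matrix.kroneckerMap_apply, Matrix.add_apply, Matrix.one_apply, Matrix.of_apply]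
    split_ifs <;> first | (exfalso; simp_all; done) | (simp; done) | (simp; ring)
  obtain ⟨A, B, _, hAB⟩ := key W
  rw [hAB, hAB, add_mul, mul_add]
  erw [← Matrix.mul_kronecker_mul, ← Matrix.mul_kronecker_mul, ← Matrix.mul_kronecker_mul, ← Matrix.mul_kronecker_mul]
  simp [h]

lemma exists_diag (d : ℕ) (W : Matrix (Fin d) (Fin d) ℂ) (hW : W ^ 3 = -W) :
    ∃ (P : Matrix (Fin d) (Fin d) ℂ) (l : Fin d → ℂ), IsUnit P.det ∧ W * P = P * Matrix.diagonal l ∧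
      ∀ j, l j = 0 ∨ 1 + (l j)^2 = 0 := by
  let S : Set (Fin d → ℂ) := {v | ∃ μ : ℂ, (μ = 0 ∨ 1 + μ^2 = 0) ∧ W.mulVec v = μ • v}
  have hI : Complex.I * Complex.I = -1 := Complex.I_mul_I
  have hS : ⊤ ≤ Submodule.span ℂ S := by
    intro v _
    have h3 : W.mulVec (W.mulVec (W.mulVec v)) = - W.mulVec v := by
      rw [Matrix.mulVec_mulVec, Matrix.mulVec_mulVec, ← Matrix.neg_mulVec, ← hW]
      congr 1; simp [pow_succ, mul_assoc]
    have e : v = (v + W.mulVec (W.mulVec v)) + (1/2 : ℂ) • (-(W.mulVec (W.mulVec v)) - Complex.I • W.mulVec v)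
        + (1/2 : ℂ) • (-(W.mulVec (W.mulVec v)) + Complex.I • W.mulVec v) := by
      module
    rw [e]
    refine add_mem (add_mem (Submodule.subset_span ⟨0, Or.inl rfl, ?_⟩) (Submodule.smul_mem _ _ (Submodule.subset_span ⟨Complex.I, Or.inr (by simp), ?_⟩)))
      (Submodule.smul_mem _ _ (Submodule.subset_span ⟨-Complex.I, Or.inr (by simp), ?_⟩))
    · rw [Matrix.mulVec_add, h3]; simp
    · simp only [Matrix.mulVec_sub, Matrix.mulVec_neg, Matrix.mulVec_smul, h3, smul_sub, smul_neg, smul_smul, hI]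
      module
    · simp only [Matrix.mulVec_add, Matrix.mulVec_neg, Matrix.mulVec_smul, h3, smul_add, smul_neg, smul_smul, neg_mul, hI, neg_smul]
      module
  let b0 := Module.Basis.ofSpan hS
  have hb0 : ∀ i, b0 i ∈ S := fun i => Module.Basis.ofSpan_subset hS ⟨i, rfl⟩
  haveI : Fintype _ := FiniteDimensional.fintypeBasisIndex b0
  have hc := Module.finrank_eq_card_basis b0
  rw [Module.finrank_fin_fun] at hc
  let b := b0.reindex (Fintype.equivFinOfCardEq hc.symm)
  have hb : ∀ i, b i ∈ S := fun i => by simp only [b, Module.Basis.reindex_apply]; exact hb0 _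
  choose l hl1 hl2 using hb
  refine ⟨(Pi.basisFun ℂ (Fin d)).toMatrix b, l, ?_, ?_, hl1⟩
  · exact (Matrix.isUnit_iff_isUnit_det _).1 (by
      haveI := (Pi.basisFun ℂ (Fin d)).invertibleToMatrix b
      exact isUnit_of_invertible _)
  · ext i j
    have := congrFun (hl2 j) i
    rw [Matrix.mul_diagonal]
    simp only [Matrix.mul_apply, Module.Basis.toMatrix_apply, Pi.basisFun_repr]
    simp only [Matrix.mulVec, dotProduct, Pi.smul_apply, smul_eq_mul] at this
    rw [this, mul_comm]

/-- **Proposition B.10 (determinant of `𝒪_{m−1}`, explicit form).** If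
`W³ = −W` and `k = rank W`, then `det 𝒪_{m−1} = 2^{k(m−1)} m^{d−k}`.
(For `W = 0`, the isotropic case, this is `m^d`; for `rank W = 2(d−n)`, the
co-isotropic case, it is `2^{2(d−n)(m−1)} m^{2n−d}`.) -/
theorem det_calO_explicit (m d : ℕ) (hm : 2 ≤ m) (hd : 1 ≤ d)
    (W : Matrix (Fin d) (Fin d) ℂ) (hW : W ^ 3 = -W) :
    (calO m d W).det = 2 ^ (W.rank * (m - 1)) * (m : ℂ) ^ (d - W.rank) := by
  classical
  obtain ⟨P, l, hP, hWP, hl⟩ := exists_diag d W hW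
  have hr : W.rank = (Finset.univ.filter (fun j => l j ≠ 0)).card := by
    rw [← Matrix.rank_mul_eq_left_of_isUnit_det P W hP, hWP,
      Matrix.rank_mul_eq_right_of_isUnit_det P _ hP, Matrix.rank_diagonal, Fintype.card_subtype]
  have hdet := congrArg Matrix.det (calO_conj m d W _ P hWP)
  rw [Matrix.det_mul, Matrix.det_mul, mul_comm] at hdet
  have hk : (Matrix.kroneckerMap (· * ·) (1 : Matrix (Fin (m-1)) (Fin (m-1)) ℂ) P).det ≠ 0 := by
    have := Matrix.det_kronecker (1 : Matrix (Fin (m-1)) (Fin (m-1)) ℂ) P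
    rw [this]
    simpa using fun h => absurd h hP.ne_zero
  rw [mul_left_cancel₀ hk hdet, calO_diag, Matrix.det_blockDiagonal]
  have hf : ∀ j, (triT (m-1) (l j)).det = if l j ≠ 0 then 2 ^ (m-1) else (m : ℂ) := by
    intro j
    split_ifs with h
    · exact triT_ne_det _ _ ((hl j).resolve_left h)
    · rw [not_not.1 h, triT_zero_det, Nat.cast_sub (by omega)]; simp
  have hc : (Finset.univ.filter (fun j => ¬ l j ≠ 0)).card = d - W.rank := by
    have := Finset.card_filter_add_card_filter_not (s := Finset.univ) (fun j => l j ≠ 0)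
    rw [Finset.card_univ, Fintype.card_fin, ← hr] at this
    omega
  simp only [hf]
  rw [Finset.prod_ite, Finset.prod_const, Finset.prod_const, ← hr, hc, ← pow_mul, mul_comm (m-1)]
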